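/- The sequence {□_n}_{n∈ℤ} is a ℤ-grading of the F-algebra □_q; that is, each □_n is a subspace of □_q, 1 ∈ □₀, the sum □_q = Σ_{n∈ℤ} □_n is direct, and □_r □_s ⊆ □_{r+s} for all r, s ∈ ℤ. -/

import Mathlib

/-!
Give `x₀, x₂` degree `1` and `x₁, x₃` degree `-1`. The `q`-Weyl relations are homogeneous of
degree `0` and the `q`-Serre relations of degree `±4`, so `x_i ↦ x_i T ^ deg x_i` extends to an
algebra homomorphism `boxCoaction : □_q → □_q[T, T⁻¹]`. Every element of `□_n` is sent to
`a T ^ n` (`boxZDeg_le`), so reading off the coefficient of `T ^ n` acts on `□_n` as the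
identity and kills the other components; hence the `□_n` are independent.

They span: the `q`-Weyl relations move an odd generator to the right of an even one
(`bx_swap`), so `⨆ n, □_n` is stable under left multiplication by the generators and contains `1`
(`iSup_boxZDeg`). Consequently `□_n` is exactly the set of `a` with `boxCoaction a = a T ^ n`
(`mem_boxZDeg_iff`), and multiplicativity follows because `boxCoaction` is multiplicative.
-/


noncomputable section

/-- The `q`-Serre expression `u³v − [3]_q u²vu + [3]_q uvu² − vu³`,
where `[3]_q = (q³ − q⁻³)/(q − q⁻¹)`. -/
def qSerre {F : Type*} [Field F] (q : F) {A : Type*} [Ring A] [Algebra F A] (u v : A) : A :=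
  u ^ 3 * v - ((q ^ 3 - q⁻¹ ^ 3) / (q - q⁻¹)) • (u ^ 2 * v * u)
    + ((q ^ 3 - q⁻¹ ^ 3) / (q - q⁻¹)) • (u * v * u ^ 2) - v * u ^ 3
/-- The defining relations of the algebra `□_q`. -/
inductive BoxRel (F : Type*) [Field F] (q : F) :
    FreeAlgebra F (ZMod 4) → FreeAlgebra F (ZMod 4) → Prop
  | weyl (i : ZMod 4) : BoxRel F q
      ((q - q⁻¹)⁻¹ • (q • (FreeAlgebra.ι F i * FreeAlgebra.ι F (i + 1))
        - q⁻¹ • (FreeAlgebra.ι F (i + 1) * FreeAlgebra.ι F i))) 1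
  | serre (i : ZMod 4) : BoxRel F q (qSerre q (FreeAlgebra.ι F i) (FreeAlgebra.ι F (i + 2))) 0

/-- The algebra `□_q`. -/
abbrev Box (F : Type*) [Field F] (q : F) := RingQuot (BoxRel F q)

/-- The generators `x_i` of `□_q`. -/
def bx (F : Type*) [Field F] (q : F) (i : ZMod 4) : Box F q :=
  RingQuot.mkAlgHom F (BoxRel F q) (FreeAlgebra.ι F i)

/-- The degree-`n` component of the even subalgebra of `□_q`: the span of the products of
exactly `n` factors, each among `x₀, x₂`. -/
def BoxEvenDeg (F : Type*) [Field F] (q : F) (n : ℕ) : Submodule F (Box F q) :=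
  Submodule.span F
    {w | ∃ l : List (ZMod 4), l.length = n ∧ (∀ i ∈ l, i = 0 ∨ i = 2) ∧
      w = (l.map (bx F q)).prod}

/-- The degree-`n` component of the odd subalgebra of `□_q`: the span of the products of
exactly `n` factors, each among `x₁, x₃`. -/
def BoxOddDeg (F : Type*) [Field F] (q : F) (n : ℕ) : Submodule F (Box F q) :=
  Submodule.span F
    {w | ∃ l : List (ZMod 4), l.length = n ∧ (∀ i ∈ l, i = 1 ∨ i = 3) ∧
      w = (l.map (bx F q)).prod}

/-- The subspace `□_{r,s} = □_r^even · □_s^odd` of `□_q`. -/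
def BoxRS (F : Type*) [Field F] (q : F) (r s : ℕ) : Submodule F (Box F q) :=
  BoxEvenDeg F q r * BoxOddDeg F q s

/-- The degree-`n` component `□_n = Σ_{r−s=n} □_{r,s}` of the ℤ-grading of `□_q`. -/
def BoxZDeg (F : Type*) [Field F] (q : F) (n : ℤ) : Submodule F (Box F q) :=
  ⨆ (p : ℕ × ℕ) (_ : (p.1 : ℤ) - (p.2 : ℤ) = n), BoxRS F q p.1 p.2

/-! ### The coaction -/

/-- The degree of the generator `x_i`: `1` for even `i` and `-1` for odd `i`. -/
def boxDeg (i : ZMod 4) : ℤ := if i = 0 ∨ i = 2 then 1 else -1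

section

variable {F : Type*} [Field F] {q : F}

open AddMonoidAlgebra

theorem bx_weyl (i : ZMod 4) :
    (q - q⁻¹)⁻¹ • (q • (bx F q i * bx F q (i + 1)) - q⁻¹ • (bx F q (i + 1) * bx F q i)) = 1 := by
  have h := RingQuot.mkAlgHom_rel F (BoxRel.weyl (F := F) (q := q) i)
  simpa only [bx, map_smul, map_sub, map_mul, map_one] using h

theorem bx_serre (i : ZMod 4) : qSerre q (bx F q i) (bx F q (i + 2)) = 0 := by
  have h := RingQuot.mkAlgHom_rel F (BoxRel.serre (F := F) (q := q) i)
  simpa only [bx, qSerre, map_smul, map_sub, map_add, map_mul, map_pow, map_zero] using h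

theorem boxDeg_succ (i : ZMod 4) : boxDeg i + boxDeg (i + 1) = 0 := by
  revert i; decide

theorem boxDeg_add_two (i : ZMod 4) : boxDeg (i + 2) = boxDeg i := by
  revert i; decide

variable (F q) in
/-- The algebra homomorphism `□_q → □_q[T, T⁻¹]` sending `x_i` to `x_i T ^ deg x_i`; Laurent
polynomials over the noncommutative `□_q` are encoded as the group algebra of `ℤ`. -/
def boxCoaction : Box F q →ₐ[F] AddMonoidAlgebra (Box F q) ℤ :=
  RingQuot.liftAlgHom F ⟨FreeAlgebra.lift F fun i => single (boxDeg i) (bx F q i), by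
    intro a b h
    induction h with
    | weyl i =>
      simp only [map_smul, map_sub, map_mul, map_one, FreeAlgebra.lift_ι_apply,
        single_mul_single, boxDeg_succ, add_comm (boxDeg (i + 1)) (boxDeg i)]
      rw [smul_single, smul_single, ← single_sub, smul_single, bx_weyl, one_def]
    | serre i =>
      have e1 : ∀ d : ℤ, 2 • d + d + d = 3 • d + d := fun d => by ring
      have e2 : ∀ d : ℤ, d + d + 2 • d = 3 • d + d := fun d => by ring
      have e3 : ∀ d : ℤ, d + 3 • d = 3 • d + d := fun d => by ring
      simp only [qSerre, map_smul, map_sub, map_add, map_mul, map_pow, map_zero,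
        FreeAlgebra.lift_ι_apply, single_mul_single, single_pow, boxDeg_add_two, e1, e2, e3]
      rw [smul_single, smul_single, ← single_sub, ← single_add, ← single_sub]
      have h := bx_serre (F := F) (q := q) i
      rw [qSerre] at h
      rw [h, single_zero]⟩

theorem boxCoaction_bx (i : ZMod 4) :
    boxCoaction F q (bx F q i) = single (boxDeg i) (bx F q i) := by
  simp [boxCoaction, bx]

theorem boxCoaction_prod (d : ℤ) (l : List (ZMod 4)) (hl : ∀ i ∈ l, boxDeg i = d) :
    boxCoaction F q (l.map (bx F q)).prod = single (l.length * d) (l.map (bx F q)).prod := by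
  induction l with
  | nil =>
    rw [List.map_nil, List.prod_nil, map_one, List.length_nil, Nat.cast_zero, zero_mul, one_def]
  | cons i l ih =>
    rw [List.map_cons, List.prod_cons, map_mul, ih fun j hj => hl j (List.mem_cons_of_mem _ hj),
      boxCoaction_bx, single_mul_single, hl i List.mem_cons_self, List.length_cons]
    congr 1
    push_cast
    ring

/-! ### Homogeneous elements and independence -/

variable (F q) in
/-- The homogeneous elements of degree `n`, as the `a` with `boxCoaction a = a T ^ n`. -/
def boxHom (n : ℤ) : Submodule F (Box F q) where
  carrier := {a | boxCoaction F q a = single n a}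
  add_mem' {a b} ha hb := by
    simp only [Set.mem_ofPred_eq] at *
    rw [map_add, ha, hb, single_add]
  zero_mem' := by simp
  smul_mem' c a ha := by
    simp only [Set.mem_ofPred_eq] at *
    rw [map_smul, ha, smul_single]

theorem mem_boxHom {n : ℤ} {a : Box F q} : a ∈ boxHom F q n ↔ boxCoaction F q a = single n a :=
  Iff.rfl

theorem boxHom_mul (m n : ℤ) : boxHom F q m * boxHom F q n ≤ boxHom F q (m + n) := by
  rw [Submodule.mul_le]
  intro a ha b hb
  rw [mem_boxHom] at *
  rw [map_mul, ha, hb, single_mul_single]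

theorem boxEvenDeg_le (r : ℕ) : BoxEvenDeg F q r ≤ boxHom F q r := by
  refine Submodule.span_le.2 ?_
  rintro _ ⟨l, rfl, hl, rfl⟩
  have h := boxCoaction_prod (F := F) (q := q) 1 l fun i hi => if_pos (hl i hi)
  rwa [mul_one] at h

theorem boxOddDeg_le (s : ℕ) : BoxOddDeg F q s ≤ boxHom F q (-s) := by
  refine Submodule.span_le.2 ?_
  rintro _ ⟨l, rfl, hl, rfl⟩
  have h := boxCoaction_prod (F := F) (q := q) (-1) l fun i hi => by
    rcases hl i hi with rfl | rfl <;> decide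
  rwa [mul_neg_one] at h

theorem boxZDeg_le (n : ℤ) : BoxZDeg F q n ≤ boxHom F q n := by
  refine iSup₂_le ?_
  rintro ⟨r, s⟩ rfl
  exact (mul_le_mul' (boxEvenDeg_le r) (boxOddDeg_le s)).trans
    (by simpa only [sub_eq_add_neg] using boxHom_mul _ _)

variable (F q) in
/-- The projection of `□_q` to degree `n`: the coefficient of `T ^ n` in `boxCoaction`. -/
def boxProj (n : ℤ) : Box F q →ₗ[F] Box F q where
  toFun a := (boxCoaction F q a).coeff n
  map_add' a b := by simp
  map_smul' c a := by simp

theorem boxProj_self {n : ℤ} {a : Box F q} (ha : a ∈ boxHom F q n) : boxProj F q n a = a := by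
  change (boxCoaction F q a).coeff n = a
  rw [mem_boxHom.1 ha, coeff_single, Finsupp.single_eq_same]

theorem boxProj_ne {m n : ℤ} (h : m ≠ n) {a : Box F q} (ha : a ∈ boxHom F q m) :
    boxProj F q n a = 0 := by
  change (boxCoaction F q a).coeff n = 0
  rw [mem_boxHom.1 ha, coeff_single, Finsupp.single_eq_of_ne h.symm]

theorem iSupIndep_boxZDeg : iSupIndep fun n : ℤ => BoxZDeg F q n := by
  intro n
  rw [Submodule.disjoint_def]
  intro a ha ha'
  have h : (⨆ m, ⨆ (_ : m ≠ n), BoxZDeg F q m) ≤ LinearMap.ker (boxProj F q n) :=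
    iSup₂_le fun m hm b hb => boxProj_ne hm (boxZDeg_le m hb)
  rw [← boxProj_self (boxZDeg_le n ha)]
  exact h ha'

/-! ### Spanning -/

/-- An odd generator can be moved to the right of an even one, at the cost of a scalar term. -/
theorem bx_swap (hq : q ≠ 0) (hq2 : q ^ 2 ≠ 1) {x y : ZMod 4} (hx : x = 0 ∨ x = 2)
    (hy : y = 1 ∨ y = 3) :
    ∃ a b : F, bx F q y * bx F q x = a • (bx F q x * bx F q y) + b • 1 := by
  have hd : q - q⁻¹ ≠ 0 := by
    intro h
    apply hq2
    field_simp at h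
    linear_combination h
  have hw (i : ZMod 4) : q • (bx F q i * bx F q (i + 1)) - q⁻¹ • (bx F q (i + 1) * bx F q i)
      = (q - q⁻¹) • 1 := by
    rw [← bx_weyl i, smul_smul, mul_inv_cancel₀ hd, one_smul]
  have hxy : y = x + 1 ∨ x = y + 1 := by
    rcases hx with rfl | rfl <;> rcases hy with rfl | rfl <;> decide
  rcases hxy with rfl | rfl
  · refine ⟨q * q, -(q * (q - q⁻¹)), ?_⟩
    rw [neg_smul (q * (q - q⁻¹)) (1 : Box F q), mul_smul q (q - q⁻¹), ← hw x, smul_sub, smul_smul, smul_smul,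
      mul_inv_cancel₀ hq, one_smul]
    abel
  · refine ⟨q⁻¹ * q⁻¹, q⁻¹ * (q - q⁻¹), ?_⟩
    rw [mul_smul q⁻¹ (q - q⁻¹), ← hw y, smul_sub, smul_smul, smul_smul,
      inv_mul_cancel₀ hq, one_smul]
    abel

/-- The products of an even word and an odd word. -/
def boxWords (F : Type*) [Field F] (q : F) : Set (Box F q) :=
  {w | ∃ l m : List (ZMod 4), (∀ i ∈ l, i = 0 ∨ i = 2) ∧ (∀ i ∈ m, i = 1 ∨ i = 3) ∧
    w = (l.map (bx F q)).prod * (m.map (bx F q)).prod}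

theorem even_mul_mem {x : ZMod 4} (hx : x = 0 ∨ x = 2) {a : Box F q}
    (ha : a ∈ Submodule.span F (boxWords F q)) :
    bx F q x * a ∈ Submodule.span F (boxWords F q) := by
  induction ha using Submodule.span_induction with
  | mem a ha =>
    obtain ⟨l, m, hl, hm, rfl⟩ := ha
    refine Submodule.subset_span ⟨x :: l, m, ?_, hm, by simp [mul_assoc]⟩
    simpa [hx] using hl
  | zero => simp
  | add a b _ _ ha hb => rw [mul_add]; exact add_mem ha hb
  | smul c a _ ha => rw [mul_smul_comm]; exact Submodule.smul_mem _ _ ha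

theorem odd_mul_word_mem (hq : q ≠ 0) (hq2 : q ^ 2 ≠ 1) {y : ZMod 4} (hy : y = 1 ∨ y = 3)
    {l m : List (ZMod 4)} (hl : ∀ i ∈ l, i = 0 ∨ i = 2) (hm : ∀ i ∈ m, i = 1 ∨ i = 3) :
    bx F q y * ((l.map (bx F q)).prod * (m.map (bx F q)).prod) ∈
      Submodule.span F (boxWords F q) := by
  induction l with
  | nil =>
    refine Submodule.subset_span ⟨[], y :: m, by simp, ?_, by simp⟩
    simpa [hy] using hm
  | cons x l ih =>
    have hx := hl x List.mem_cons_self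
    have hl' : ∀ i ∈ l, i = 0 ∨ i = 2 := fun i hi => hl i (List.mem_cons_of_mem _ hi)
    obtain ⟨a, b, hab⟩ := bx_swap (F := F) (q := q) hq hq2 hx hy
    rw [List.map_cons, List.prod_cons, mul_assoc, ← mul_assoc (bx F q y), hab, add_mul,
      smul_mul_assoc, smul_mul_assoc, one_mul, mul_assoc (bx F q x)]
    exact add_mem (Submodule.smul_mem _ _ (even_mul_mem hx (ih hl')))
      (Submodule.smul_mem _ _ (Submodule.subset_span ⟨l, m, hl', hm, rfl⟩))

theorem bx_mul_mem (hq : q ≠ 0) (hq2 : q ^ 2 ≠ 1) (x : ZMod 4) {a : Box F q}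
    (ha : a ∈ Submodule.span F (boxWords F q)) :
    bx F q x * a ∈ Submodule.span F (boxWords F q) := by
  have hx : (x = 0 ∨ x = 2) ∨ (x = 1 ∨ x = 3) := by revert x; decide
  rcases hx with hx | hx
  · exact even_mul_mem hx ha
  induction ha using Submodule.span_induction with
  | mem a ha =>
    obtain ⟨l, m, hl, hm, rfl⟩ := ha
    exact odd_mul_word_mem hq hq2 hx hl hm
  | zero => simp
  | add a b _ _ ha hb => rw [mul_add]; exact add_mem ha hb
  | smul c a _ ha => rw [mul_smul_comm]; exact Submodule.smul_mem _ _ ha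

theorem span_boxWords (hq : q ≠ 0) (hq2 : q ^ 2 ≠ 1) : Submodule.span F (boxWords F q) = ⊤ := by
  -- The span is a left ideal containing `1`.
  have key (f : FreeAlgebra F (ZMod 4)) : ∀ a ∈ Submodule.span F (boxWords F q),
      RingQuot.mkAlgHom F (BoxRel F q) f * a ∈ Submodule.span F (boxWords F q) := by
    induction f using FreeAlgebra.induction with
    | grade0 c =>
      intro a ha
      rw [AlgHom.commutes, ← Algebra.smul_def]
      exact Submodule.smul_mem _ _ ha
    | grade1 i => exact fun a ha => bx_mul_mem hq hq2 i ha
    | mul f g hf hg =>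
      intro a ha
      rw [map_mul, mul_assoc]
      exact hf _ (hg a ha)
    | add f g hf hg =>
      intro a ha
      rw [map_add, add_mul]
      exact add_mem (hf a ha) (hg a ha)
  rw [eq_top_iff]
  rintro a -
  obtain ⟨f, rfl⟩ := RingQuot.mkAlgHom_surjective F (BoxRel F q) a
  simpa using key f 1 (Submodule.subset_span ⟨[], [], by simp, by simp, by simp⟩)

theorem word_mem_boxZDeg {l m : List (ZMod 4)} (hl : ∀ i ∈ l, i = 0 ∨ i = 2)
    (hm : ∀ i ∈ m, i = 1 ∨ i = 3) :
    (l.map (bx F q)).prod * (m.map (bx F q)).prod ∈ BoxZDeg F q (l.length - m.length) :=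
  Submodule.mem_iSup_of_mem (l.length, m.length) <| Submodule.mem_iSup_of_mem rfl <|
    Submodule.mul_mem_mul (Submodule.subset_span ⟨l, rfl, hl, rfl⟩)
      (Submodule.subset_span ⟨m, rfl, hm, rfl⟩)

theorem iSup_boxZDeg (hq : q ≠ 0) (hq2 : q ^ 2 ≠ 1) : (⨆ n : ℤ, BoxZDeg F q n) = ⊤ := by
  rw [eq_top_iff, ← span_boxWords hq hq2, Submodule.span_le]
  rintro _ ⟨l, m, hl, hm, rfl⟩
  exact Submodule.mem_iSup_of_mem _ (word_mem_boxZDeg hl hm)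

theorem mem_boxZDeg_iff (hq : q ≠ 0) (hq2 : q ^ 2 ≠ 1) {n : ℤ} {a : Box F q} :
    a ∈ BoxZDeg F q n ↔ a ∈ boxHom F q n := by
  refine ⟨fun ha => boxZDeg_le n ha, fun ha => ?_⟩
  -- The projection maps every component, hence all of `□_q`, into `□_n`, and it fixes `a`.
  have h : (⨆ m : ℤ, BoxZDeg F q m) ≤ (BoxZDeg F q n).comap (boxProj F q n) := by
    refine iSup_le fun m b hb => ?_
    rw [Submodule.mem_comap]
    by_cases hm : m = n
    · subst hm
      rwa [boxProj_self (boxZDeg_le m hb)]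
    · rw [boxProj_ne hm (boxZDeg_le m hb)]
      exact zero_mem _
  rw [iSup_boxZDeg hq hq2] at h
  rw [← boxProj_self ha]
  exact h Submodule.mem_top

end

/-- Proposition 10.17: the sequence `{□_n}_{n∈ℤ}` is a ℤ-grading of `□_q`: the `□_n` are
independent subspaces whose (direct) sum is all of `□_q`, `1 ∈ □₀`, and
`□_r □_s ⊆ □_{r+s}`. -/
theorem stmt16 (F : Type*) [Field F] (q : F) (hq : q ≠ 0) (hq2 : q ^ 2 ≠ 1) :
    DirectSum.IsInternal (fun n : ℤ => BoxZDeg F q n) ∧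
    (1 : Box F q) ∈ BoxZDeg F q 0 ∧
    ∀ r s : ℤ, BoxZDeg F q r * BoxZDeg F q s ≤ BoxZDeg F q (r + s) := by
  refine ⟨DirectSum.isInternal_submodule_of_iSupIndep_of_iSup_eq_top iSupIndep_boxZDeg
    (iSup_boxZDeg hq hq2), ?_, fun r s => ?_⟩
  · simpa using word_mem_boxZDeg (F := F) (q := q) (l := []) (m := []) (by simp) (by simp)
  · have h (n : ℤ) : BoxZDeg F q n = boxHom F q n :=
      Submodule.ext fun _ => mem_boxZDeg_iff hq hq2
    rw [h, h, h]
    exact boxHom_mul r s
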